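/- (Corollary 4.) Let Z_k = (X_k,Y_k), k ≥ 1, be random variables with values in [0,1]^d × [0,1]^d such that X_k and Y_k have the same distribution for every k ≥ 1. Let 𝒜_k be the σ-algebra generated by Z_k and α(ℓ) = sup_{|j−k| ≥ ℓ} α(𝒜_j,𝒜_k). If Σ_{ℓ=1}^∞ α(ℓ) < ∞, then there is a constant C > 0 (depending only on d and Σ_ℓ α(ℓ)) such that for all n ≥ 2, the empirical measures μ_n = (1/n)Σ_{k=1}^n δ_{X_k} and ν_n = (1/n)Σ_{k=1}^n δ_{Y_k} satisfy E(W₁(μ_n,ν_n)) ≤ C/√n if d = 1; ≤ C·√(log n / n) if d = 2; and ≤ C/n^{1/d} if d ≥ 3. -/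

import Mathlib

open MeasureTheory ProbabilityTheory Real ENNReal

noncomputable section

/-- The Rosenblatt mixing coefficient `α(𝒜₁, 𝒜₂)` of two sub-σ-algebras. -/
def rosenblattAlpha {Ω : Type*} [MeasurableSpace Ω] (P : Measure Ω)
    (m1 m2 : MeasurableSpace Ω) : ℝ :=
  sSup {r | ∃ A B : Set Ω, MeasurableSet[m1] A ∧ MeasurableSet[m2] B ∧
    r = |(P (A ∩ B)).toReal - (P A).toReal * (P B).toReal|}

/-- The mixing sequence `α(ℓ) = sup_{|j−k| ≥ ℓ} α(σ(Z_j), σ(Z_k))` of a sequence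
of random variables. -/
def mixingSeq {Ω : Type*} [MeasurableSpace Ω] (P : Measure Ω)
    {E : Type*} [MeasurableSpace E] (Z : ℕ → Ω → E) (ℓ : ℕ) : ℝ :=
  sSup {r | ∃ j k : ℕ, ℓ ≤ Nat.dist j k ∧
    r = rosenblattAlpha P (MeasurableSpace.comap (Z j) inferInstance)
          (MeasurableSpace.comap (Z k) inferInstance)}

/-- Euclidean distance on `Fin d → ℝ`. -/
def euclidDist {d : ℕ} (x y : Fin d → ℝ) : ℝ := Real.sqrt (∑ i, (x i - y i) ^ 2)

/-- `γ` is a coupling of `μ` and `ν`. -/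
def IsCoupling {α : Type*} [MeasurableSpace α]
    (γ : Measure (α × α)) (μ ν : Measure α) : Prop :=
  γ.map Prod.fst = μ ∧ γ.map Prod.snd = ν

/-- Optimal transport cost for a cost function `c`. -/
def transportCost {α : Type*} [MeasurableSpace α] (c : α → α → ℝ)
    (μ ν : Measure α) : ℝ≥0∞ :=
  ⨅ (γ : Measure (α × α)) (_ : IsCoupling γ μ ν),
    ∫⁻ p, ENNReal.ofReal (c p.1 p.2) ∂γ

/-- Euclidean Kantorovich distance `W₁`. -/
def W1 {d : ℕ} (μ ν : Measure (Fin d → ℝ)) : ℝ≥0∞ := transportCost euclidDist μ ν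

/-- The empirical measure `(1/n) Σ_{k<n} δ_{X_k(ω)}` of a sequence. -/
def empMeasure {d : ℕ} {Ω : Type*} [MeasurableSpace Ω]
    (X : ℕ → Ω → (Fin d → ℝ)) (n : ℕ) (ω : Ω) : Measure (Fin d → ℝ) :=
  (n : ℝ≥0∞)⁻¹ • ∑ k ∈ Finset.range n, Measure.dirac (X k ω)

/-- Feasible dual values. -/
def feasSet {n : ℕ} (c : Fin n × Fin n → ℝ) (R : ℝ) (u : Fin n × Fin n → ℝ) : Set ℝ :=
  {r | ∃ (φ ψ : Fin n → ℝ) (s : ℝ), 0 ≤ s ∧ (∀ i j, u (i, j) ≤ φ i + ψ j + s * c (i, j)) ∧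
    r = ∑ i, φ i + ∑ j, ψ j + s * R}

lemma feasSet_lower {n : ℕ} (c : Fin n × Fin n → ℝ) (R : ℝ)
    (h : ∀ φ ψ : Fin n → ℝ, (∀ i j, φ i + ψ j ≤ c (i, j)) → ∑ i, φ i + ∑ j, ψ j ≤ R)
    (u : Fin n × Fin n → ℝ) (K : ℝ) (hK : ∀ p, -K ≤ u p) {r : ℝ} (hr : r ∈ feasSet c R u) :
    -(n * K) ≤ r := by
  obtain ⟨φ, ψ, s, hs, hu, rfl⟩ := hr
  rcases hs.eq_or_lt with rfl | hs
  · have : ∑ i : Fin n, (-K) ≤ ∑ i, (φ i + ψ i) := by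
      apply Finset.sum_le_sum
      intro i _
      have h1 := hu i i
      have h2 := hK (i, i)
      linarith
    simp [Finset.sum_add_distrib] at this
    linarith
  · have h1 := h (fun i => (-(φ i) - K) / s) (fun j => -(ψ j) / s) (by
      intro i j
      have h1 := hu i j
      have h2 := hK (i, j)
      rw [← add_div, div_le_iff₀ hs]
      linarith)
    rw [← Finset.sum_div, ← Finset.sum_div, ← add_div, div_le_iff₀ hs] at h1
    simp [Finset.sum_sub_distrib] at h1
    linarith

lemma feasSet_bdd {n : ℕ} (c : Fin n × Fin n → ℝ) (R : ℝ)
    (h : ∀ φ ψ : Fin n → ℝ, (∀ i j, φ i + ψ j ≤ c (i, j)) → ∑ i, φ i + ∑ j, ψ j ≤ R)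
    (u : Fin n × Fin n → ℝ) : BddBelow (feasSet c R u) := by
  refine ⟨_, fun r hr => feasSet_lower c R h u (∑ p, |u p|) (fun p => ?_) hr⟩
  have := Finset.single_le_sum (f := fun p => |u p|) (fun i _ => abs_nonneg _) (Finset.mem_univ p)
  have h2 := neg_abs_le (u p)
  linarith

lemma feasSet_nonempty {n : ℕ} (c : Fin n × Fin n → ℝ) (R : ℝ)
    (u : Fin n × Fin n → ℝ) : (feasSet c R u).Nonempty := by
  refine ⟨_, fun _ => ∑ p, |u p|, 0, 0, le_rfl, fun i j => ?_, rfl⟩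
  have := Finset.single_le_sum (f := fun p => |u p|) (fun i _ => abs_nonneg _)
    (Finset.mem_univ (i, j))
  have h2 := le_abs_self (u (i, j))
  simp only [Pi.zero_apply] at this ⊢
  linarith

open scoped Pointwise in
lemma finite_duality {n : ℕ} (c : Fin n × Fin n → ℝ) (R : ℝ)
    (h : ∀ φ ψ : Fin n → ℝ, (∀ i j, φ i + ψ j ≤ c (i, j)) → ∑ i, φ i + ∑ j, ψ j ≤ R) :
    ∃ w : Fin n × Fin n → ℝ, (∀ p, 0 ≤ w p) ∧ (∀ i, ∑ j, w (i, j) = 1) ∧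
      (∀ j, ∑ i, w (i, j) = 1) ∧ ∑ p, w p * c p ≤ R := by
  classical
  have hb := feasSet_bdd c R h
  have hne := feasSet_nonempty c R
  obtain ⟨g, -, hg⟩ := exists_extension_of_le_sublinear (⊥ : (Fin n × Fin n → ℝ) →ₗ.[ℝ] ℝ)
    (fun u => sInf (feasSet c R u))
    (by
      intro k hk u
      have : feasSet c R (k • u) = k • feasSet c R u := by
        ext r
        rw [Set.mem_smul_set]
        constructor
        · rintro ⟨φ, ψ, s, hs, hu, rfl⟩
          refine ⟨_, ⟨fun i => k⁻¹ * φ i, fun j => k⁻¹ * ψ j, k⁻¹ * s, by positivity, ?_, rfl⟩, ?_⟩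
          · intro i j
            have := hu i j
            simp only [Pi.smul_apply, smul_eq_mul] at this
            have h3 : u (i, j) = k⁻¹ * (k * u (i, j)) := by field_simp
            rw [h3]
            have := mul_le_mul_of_nonneg_left this (inv_pos.2 hk).le
            linarith
          · simp only [← Finset.mul_sum, smul_eq_mul]
            field_simp
        · rintro ⟨_, ⟨φ, ψ, s, hs, hu, rfl⟩, rfl⟩
          refine ⟨fun i => k * φ i, fun j => k * ψ j, k * s, by positivity, ?_, ?_⟩
          · intro i j
            have := mul_le_mul_of_nonneg_left (hu i j) hk.le
            simp only [Pi.smul_apply, smul_eq_mul]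
            linarith
          · simp only [← Finset.mul_sum, smul_eq_mul]
            ring
      simp only [this]
      rw [Real.sInf_smul_of_nonneg hk.le]
      rfl)
    (by
      intro u v
      rw [← csInf_add (hne u) (hb u) (hne v) (hb v)]
      apply csInf_le_csInf (hb _) ((hne u).add (hne v))
      rintro _ ⟨_, ⟨φ, ψ, s, hs, hu, rfl⟩, _, ⟨φ', ψ', s', hs', hu', rfl⟩, rfl⟩
      refine ⟨φ + φ', ψ + ψ', s + s', by positivity, ?_, ?_⟩
      · intro i j
        have h1 := hu i j
        have h2 := hu' i j
        simp only [Pi.add_apply]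
        linarith
      · simp only [Pi.add_apply, Finset.sum_add_distrib]
        ring)
    (by
      rintro ⟨x, hx⟩
      have hx0 : x = 0 := (Submodule.mem_bot ℝ).1 hx
      subst hx0
      have : (⊥ : (Fin n × Fin n → ℝ) →ₗ.[ℝ] ℝ) ⟨0, hx⟩ = 0 := LinearPMap.map_zero _
      rw [this]
      apply le_csInf (hne _)
      intro r hr
      simpa using feasSet_lower c R h _ 0 (by simp) hr)
  have hg' : ∀ (u : Fin n × Fin n → ℝ) (φ ψ : Fin n → ℝ) (s : ℝ), 0 ≤ s →
      (∀ i j, u (i, j) ≤ φ i + ψ j + s * c (i, j)) → g u ≤ ∑ i, φ i + ∑ j, ψ j + s * R := by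
    intro u φ ψ s hs hu
    exact (hg u).trans (csInf_le (hb u) ⟨φ, ψ, s, hs, hu, rfl⟩)
  have hsum : ∀ u : Fin n × Fin n → ℝ, g u = ∑ p, u p * g (Pi.single p 1) := by
    intro u
    rw [LinearMap.pi_apply_eq_sum_univ g u]
    refine Finset.sum_congr rfl fun p _ => ?_
    rw [smul_eq_mul]
    congr 2
    ext q
    simp [Pi.single_apply, eq_comm]
  refine ⟨fun p => g (Pi.single p 1), ?_, ?_, ?_, ?_⟩
  · intro p
    have := hg' (-Pi.single p 1) 0 0 0 le_rfl (by
      intro i j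
      have : (0 : ℝ) ≤ (Pi.single p 1 : Fin n × Fin n → ℝ) (i, j) := by
        rw [Pi.single_apply]; split_ifs <;> simp
      simpa using this)
    simp at this
    exact this
  · intro i
    have e : ∑ j, g (Pi.single (i, j) 1) = g (fun p => if p.1 = i then 1 else 0) := by
      rw [hsum (fun p => if p.1 = i then 1 else 0), Fintype.sum_prod_type_right]
      simp
    simp only [e]
    apply le_antisymm
    · refine (hg' _ (Pi.single i 1) 0 0 le_rfl ?_).trans ?_
      · intro k j; simp [Pi.single_apply]
      · simp
    · have := hg' (-(fun p : Fin n × Fin n => if p.1 = i then 1 else 0)) (-Pi.single i 1) 0 0 le_rfl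
        (by intro k j; simp [Pi.single_apply])
      rw [map_neg] at this
      simp at this
      exact this
  · intro i
    have e : ∑ j, g (Pi.single (j, i) 1) = g (fun p => if p.2 = i then 1 else 0) := by
      rw [hsum (fun p => if p.2 = i then 1 else 0), Fintype.sum_prod_type]
      simp
    simp only [e]
    apply le_antisymm
    · refine (hg' _ 0 (Pi.single i 1) 0 le_rfl ?_).trans ?_
      · intro k j; simp [Pi.single_apply]
      · simp
    · have := hg' (-(fun p : Fin n × Fin n => if p.2 = i then 1 else 0)) 0 (-Pi.single i 1) 0 le_rfl
        (by intro k j; simp [Pi.single_apply])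
      rw [map_neg] at this
      simp at this
      exact this
  · have e : ∑ p, g (Pi.single p 1) * c p = g c := by
      rw [hsum c]; exact Finset.sum_congr rfl fun p _ => mul_comm _ _
    simp only [e]
    have := hg' c 0 0 1 zero_le_one (by intro i j; simp)
    simpa using this

/-- l1 distance -/
def l1d {d : ℕ} (x y : Fin d → ℝ) : ℝ := ∑ i, |x i - y i|

lemma euclidDist_le_l1d {d : ℕ} (x y : Fin d → ℝ) : euclidDist x y ≤ l1d x y := by
  unfold euclidDist l1d
  rw [Real.sqrt_le_left (Finset.sum_nonneg fun i _ => abs_nonneg _)]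
  calc ∑ i, (x i - y i) ^ 2 = ∑ i, |x i - y i| ^ 2 := by simp
    _ ≤ _ := Finset.sum_sq_le_sq_sum_of_nonneg (fun i _ => abs_nonneg _)

lemma W1_le_of_lip {d n : ℕ} (hn : 0 < n) (x y : ℕ → Fin d → ℝ) (R : ℝ)
    (h : ∀ F : (Fin d → ℝ) → ℝ, (∀ a b, F a - F b ≤ l1d a b) →
      (∑ k ∈ Finset.range n, (F (x k) - F (y k))) / n ≤ R) :
    W1 ((n : ℝ≥0∞)⁻¹ • ∑ k ∈ Finset.range n, Measure.dirac (x k))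
      ((n : ℝ≥0∞)⁻¹ • ∑ k ∈ Finset.range n, Measure.dirac (y k)) ≤ ENNReal.ofReal R := by
  have hn' : (0 : ℝ) < n := by exact_mod_cast hn
  have : Nonempty (Fin n) := ⟨⟨0, hn⟩⟩
  obtain ⟨w, hw0, hw1, hw2, hwc⟩ := finite_duality
    (fun p : Fin n × Fin n => l1d (x p.1) (y p.2)) (n * R) (by
    intro φ ψ hφ
    let F : (Fin d → ℝ) → ℝ := fun a =>
      Finset.univ.inf' Finset.univ_nonempty (fun j : Fin n => l1d a (y j) - ψ j)
    have hF := h F (by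
      intro a b
      obtain ⟨j, -, hj⟩ := Finset.exists_mem_eq_inf' (Finset.univ_nonempty (α := Fin n))
        (fun j : Fin n => l1d b (y j) - ψ j)
      have h1 : F a ≤ l1d a (y j) - ψ j := Finset.inf'_le _ (Finset.mem_univ j)
      have h2 : F b = l1d b (y j) - ψ j := hj
      have h3 : l1d a (y j) ≤ l1d a b + l1d b (y j) := by
        unfold l1d
        rw [← Finset.sum_add_distrib]
        exact Finset.sum_le_sum fun i _ => abs_sub_le _ _ _
      linarith)
    rw [div_le_iff₀ hn', Finset.sum_range (fun k => F (x k) - F (y k))] at hF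
    rw [← Finset.sum_add_distrib, mul_comm]
    refine le_trans (Finset.sum_le_sum fun i _ => ?_) hF
    have h1 : φ i ≤ F (x i) := by
      apply Finset.le_inf'
      intro j _
      have := hφ i j
      simp only at this
      linarith
    have h2 : F (y i) ≤ - ψ i := by
      have : F (y i) ≤ l1d (y i) (y i) - ψ i := Finset.inf'_le _ (Finset.mem_univ i)
      simpa [l1d] using this
    linarith)
  have hninv : ENNReal.ofReal ((n : ℝ)⁻¹) = (n : ℝ≥0∞)⁻¹ := by
    rw [ENNReal.ofReal_inv_of_pos hn', ENNReal.ofReal_natCast]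
  refine iInf₂_le_of_le ((n : ℝ≥0∞)⁻¹ •
    ∑ p : Fin n × Fin n, ENNReal.ofReal (w p) • Measure.dirac (x p.1, y p.2)) ⟨?_, ?_⟩ ?_
  · ext s hs
    rw [Measure.map_apply measurable_fst hs]
    simp only [Measure.smul_apply, Measure.finsetSum_apply, smul_eq_mul]
    rw [Finset.sum_range (fun k => Measure.dirac (x k) s), Fintype.sum_prod_type]
    congr 1
    refine Finset.sum_congr rfl fun i _ => ?_
    have : ∀ j, Measure.dirac (x i, y j) (Prod.fst ⁻¹' s) = Measure.dirac (x i) s := by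
      intro j
      rw [Measure.dirac_apply' _ hs, Measure.dirac_apply' _ (measurable_fst hs)]
      rfl
    simp only [this]
    rw [← Finset.sum_mul, ← ENNReal.ofReal_sum_of_nonneg (fun j _ => hw0 _), hw1]
    simp
  · ext s hs
    rw [Measure.map_apply measurable_snd hs]
    simp only [Measure.smul_apply, Measure.finsetSum_apply, smul_eq_mul]
    rw [Finset.sum_range (fun k => Measure.dirac (y k) s), Fintype.sum_prod_type_right]
    congr 1
    refine Finset.sum_congr rfl fun i _ => ?_
    have : ∀ j, Measure.dirac (x j, y i) (Prod.snd ⁻¹' s) = Measure.dirac (y i) s := by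
      intro j
      rw [Measure.dirac_apply' _ hs, Measure.dirac_apply' _ (measurable_snd hs)]
      rfl
    simp only [this]
    rw [← Finset.sum_mul, ← ENNReal.ofReal_sum_of_nonneg (fun j _ => hw0 _), hw2]
    simp
  · rw [lintegral_smul_measure, lintegral_finsetSum_measure]
    simp only [lintegral_smul_measure, lintegral_dirac, smul_eq_mul]
    calc (n : ℝ≥0∞)⁻¹ * ∑ p : Fin n × Fin n, ENNReal.ofReal (w p) *
          ENNReal.ofReal (euclidDist (x p.1) (y p.2))
        ≤ (n : ℝ≥0∞)⁻¹ * ∑ p : Fin n × Fin n, ENNReal.ofReal (w p * l1d (x p.1) (y p.2)) := by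
          gcongr with p _
          rw [ENNReal.ofReal_mul (hw0 p)]
          gcongr
          exact euclidDist_le_l1d _ _
      _ = ENNReal.ofReal ((n : ℝ)⁻¹ * ∑ p : Fin n × Fin n, w p * l1d (x p.1) (y p.2)) := by
          rw [ENNReal.ofReal_mul (by positivity), hninv, ENNReal.ofReal_sum_of_nonneg]
          intro p _
          exact mul_nonneg (hw0 p) (Finset.sum_nonneg fun i _ => abs_nonneg _)
      _ ≤ _ := by
          apply ENNReal.ofReal_le_ofReal
          rw [inv_mul_le_iff₀ hn']
          exact hwc

/-- Characters of the discrete torus. -/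
def ech {d M : ℕ} [NeZero M] (m x : Fin d → ZMod M) : ℂ :=
  ∏ i, ZMod.stdAddChar (m i * x i)

/-- Discrete Fourier transform. -/
def fhat {d M : ℕ} [NeZero M] (f : (Fin d → ZMod M) → ℂ) (m : Fin d → ZMod M) : ℂ :=
  ∑ x, f x * ech m (-x)

/-- Squared frequency. -/
def msq {d M : ℕ} (m : Fin d → ZMod M) : ℝ := ∑ i, ((m i).valMinAbs : ℝ) ^ 2

section fourier
set_option linter.unusedSectionVars false
variable {d M : ℕ} [NeZero M]

lemma std_norm (a : ZMod M) : ‖(ZMod.stdAddChar a : ℂ)‖ = 1 := by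
  simp

lemma ech_norm (m x : Fin d → ZMod M) : ‖ech m x‖ = 1 := by
  unfold ech
  rw [norm_prod]
  simp

lemma ech_add (m x y : Fin d → ZMod M) : ech m (x + y) = ech m x * ech m y := by
  unfold ech
  rw [← Finset.prod_mul_distrib]
  refine Finset.prod_congr rfl fun i _ => ?_
  rw [Pi.add_apply, mul_add, AddChar.map_add_eq_mul]

lemma ech_zero (m : Fin d → ZMod M) : ech m 0 = 1 := by
  simp [ech]

lemma ech_zero_left (x : Fin d → ZMod M) : ech 0 x = 1 := by
  simp [ech]

lemma ech_conj (m x : Fin d → ZMod M) : (starRingEnd ℂ) (ech m (-x)) = ech m x := by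
  have h1 : ech m (-x) * ech m x = 1 := by rw [← ech_add]; simp [ech_zero]
  rw [← Complex.inv_eq_conj (ech_norm _ _)]
  rw [eq_inv_of_mul_eq_one_left h1, inv_inv]

lemma ech_orth (x : Fin d → ZMod M) :
    ∑ m : Fin d → ZMod M, ech m x = if x = 0 then (M : ℂ) ^ d else 0 := by
  classical
  have : ∑ m : Fin d → ZMod M, ech m x = ∏ i : Fin d, ∑ a : ZMod M, ZMod.stdAddChar (a * x i) := by
    rw [Finset.prod_univ_sum, Fintype.piFinset_univ]
    rfl
  rw [this]
  simp only [AddChar.sum_mulShift _ (ZMod.isPrimitive_stdAddChar M)]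
  split_ifs with h
  · subst h; simp
  · obtain ⟨i, hi⟩ := Function.ne_iff.1 h
    apply Finset.prod_eq_zero (Finset.mem_univ i)
    simp at hi
    simp [hi]

lemma fhat_inv (f : (Fin d → ZMod M) → ℂ) (u : Fin d → ZMod M) :
    ∑ m, fhat f m * ech m u = (M : ℂ) ^ d * f u := by
  unfold fhat
  simp only [Finset.sum_mul, mul_assoc, ← ech_add]
  rw [Finset.sum_comm]
  simp only [← Finset.mul_sum, ech_orth]
  rw [Finset.sum_eq_single u]
  · simp [mul_comm]
  · intro x _ hx
    rw [if_neg, mul_zero]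
    intro h
    apply hx
    exact (neg_add_eq_zero.1 h)
  · simp

lemma fhat_parseval (f : (Fin d → ZMod M) → ℂ) :
    ∑ m, ‖fhat f m‖ ^ 2 = (M : ℝ) ^ d * ∑ x, ‖f x‖ ^ 2 := by
  have : ((∑ m, ‖fhat f m‖ ^ 2 : ℝ) : ℂ) = (((M : ℝ) ^ d * ∑ x, ‖f x‖ ^ 2 : ℝ) : ℂ) := by
    push_cast
    simp only [← Complex.mul_conj']
    calc ∑ m, fhat f m * (starRingEnd ℂ) (fhat f m)
        = ∑ m, ∑ x, (starRingEnd ℂ) (f x) * (fhat f m * ech m x) := by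
          refine Finset.sum_congr rfl fun m _ => ?_
          conv_lhs => rw [show (starRingEnd ℂ) (fhat f m) =
            ∑ x, (starRingEnd ℂ) (f x) * ech m x by
              unfold fhat; rw [map_sum]; simp only [map_mul, ech_conj]]
          rw [Finset.mul_sum]
          refine Finset.sum_congr rfl fun x _ => by ring
      _ = _ := by
          rw [Finset.sum_comm]
          simp only [← Finset.mul_sum, fhat_inv]
          rw [Finset.mul_sum]
          exact Finset.sum_congr rfl fun x _ => by ring
  exact_mod_cast this

lemma fhat_shift (f : (Fin d → ZMod M) → ℂ) (e m : Fin d → ZMod M) :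
    fhat (fun x => f (x + e) - f x) m = (ech m e - 1) * fhat f m := by
  unfold fhat
  simp only [sub_mul, Finset.sum_sub_distrib, one_mul]
  congr 1
  rw [Finset.mul_sum, ← Equiv.sum_comp (Equiv.addRight e) (fun x => ech m e * (f x * ech m (-x)))]
  refine Finset.sum_congr rfl fun x _ => ?_
  simp only [Equiv.coe_addRight]
  have : ech m (-x) = ech m e * ech m (-(x+e)) := by rw [← ech_add]; congr 1; abel
  rw [this]; ring

lemma std_sub_one (a : ZMod M) : 4 / (M : ℝ) * |(a.valMinAbs : ℝ)| ≤ ‖(ZMod.stdAddChar a : ℂ) - 1‖ := by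
  have hM : (0 : ℝ) < M := by exact_mod_cast Nat.pos_of_ne_zero (NeZero.ne M)
  have hv : |(a.valMinAbs : ℝ)| ≤ M / 2 := by
    have h1 := ZMod.valMinAbs_mem_Ioc a
    have h2 : -(M : ℝ) < a.valMinAbs * 2 := by exact_mod_cast h1.1
    have h3 : (a.valMinAbs : ℝ) * 2 ≤ M := by exact_mod_cast h1.2
    rw [abs_le]; constructor <;> linarith
  conv_rhs => rw [← ZMod.coe_valMinAbs a, ZMod.stdAddChar_coe]
  have e : (2 * π * Complex.I * (a.valMinAbs : ℂ) / (M : ℂ)) =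
      Complex.I * ((2 * π * a.valMinAbs / M : ℝ) : ℂ) := by push_cast; ring
  rw [e, Complex.norm_exp_I_mul_ofReal_sub_one, norm_mul, Real.norm_eq_abs, Real.norm_eq_abs]
  have e2 : (2 * π * a.valMinAbs / M : ℝ) / 2 = π / M * a.valMinAbs := by ring
  rw [e2]
  have habs : |π / M * (a.valMinAbs : ℝ)| = π / M * |(a.valMinAbs : ℝ)| := by
    rw [abs_mul, abs_of_nonneg (by positivity)]
  have := Real.mul_abs_le_abs_sin (x := π / M * a.valMinAbs) (by
    rw [habs]
    calc π / M * |(a.valMinAbs : ℝ)| ≤ π / M * (M / 2) := by gcongr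
      _ = π / 2 := by field_simp)
  rw [habs] at this
  have e3 : 2 / π * (π / M * |(a.valMinAbs : ℝ)|) = 2 / M * |(a.valMinAbs : ℝ)| := by
    field_simp
  rw [e3] at this
  rw [abs_two]
  calc 4 / (M : ℝ) * |(a.valMinAbs : ℝ)| = 2 * (2 / M * |(a.valMinAbs : ℝ)|) := by ring
    _ ≤ _ := by gcongr

lemma ech_single (m : Fin d → ZMod M) (i : Fin d) :
    ech m (Pi.single i 1) = ZMod.stdAddChar (m i) := by
  unfold ech
  rw [Finset.prod_eq_single i]
  · simp
  · intro j _ hj; simp [hj]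
  · simp

lemma msq_nonneg (m : Fin d → ZMod M) : 0 ≤ msq m := Finset.sum_nonneg fun _ _ => sq_nonneg _

lemma msq_pos (m : Fin d → ZMod M) (hm : m ≠ 0) : 0 < msq m := by
  obtain ⟨i, hi⟩ := Function.ne_iff.1 hm
  refine Finset.sum_pos' (fun i _ => sq_nonneg _) ⟨i, Finset.mem_univ i, ?_⟩
  have : (m i).valMinAbs ≠ 0 := by
    rw [Ne, ZMod.valMinAbs_eq_zero]; exact hi
  positivity

lemma fhat_grad (f : (Fin d → ZMod M) → ℝ) (L : ℝ)
    (hf : ∀ x i, |f (x + Pi.single i 1) - f x| ≤ L) :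
    ∑ m, msq m * ‖fhat (fun x => (f x : ℂ)) m‖ ^ 2 ≤
      (M : ℝ) ^ 2 / 16 * ((M : ℝ) ^ d * (d * ((M : ℝ) ^ d * L ^ 2))) := by
  have hM : (0 : ℝ) < M := by exact_mod_cast Nat.pos_of_ne_zero (NeZero.ne M)
  calc ∑ m, msq m * ‖fhat (fun x => (f x : ℂ)) m‖ ^ 2
      ≤ ∑ m, ∑ i, (M : ℝ) ^ 2 / 16 *
        ‖fhat (fun x => ((f (x + Pi.single i 1) : ℝ) : ℂ) - (f x : ℂ)) m‖ ^ 2 := by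
        refine Finset.sum_le_sum fun m _ => ?_
        unfold msq
        rw [Finset.sum_mul]
        refine Finset.sum_le_sum fun i _ => ?_
        rw [fhat_shift (fun x => (f x : ℂ)), ech_single, norm_mul, mul_pow]
        have h1 := std_sub_one (m i)
        have h2 := pow_le_pow_left₀ (by positivity) h1 2
        rw [mul_pow, sq_abs, div_pow] at h2
        rw [← mul_assoc]
        gcongr
        calc ((m i).valMinAbs : ℝ) ^ 2 = (M : ℝ) ^ 2 / 16 * (4 ^ 2 / (M : ℝ) ^ 2 * ((m i).valMinAbs : ℝ) ^ 2) := by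
              field_simp; norm_num
          _ ≤ _ := by gcongr
    _ = (M : ℝ) ^ 2 / 16 * ∑ i : Fin d, (M : ℝ) ^ d *
          ∑ x, ‖((f (x + Pi.single i 1) : ℝ) : ℂ) - (f x : ℂ)‖ ^ 2 := by
        rw [Finset.sum_comm]
        simp only [← Finset.mul_sum, fhat_parseval]
    _ ≤ (M : ℝ) ^ 2 / 16 * ∑ i : Fin d, (M : ℝ) ^ d * ∑ x : Fin d → ZMod M, L ^ 2 := by
        gcongr with i _ x _
        rw [← Complex.ofReal_sub, Complex.norm_real]
        exact hf x i
    _ = _ := by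
        simp only [Finset.sum_const, Finset.card_univ, Fintype.card_pi, ZMod.card,
          Finset.prod_const, Fintype.card_fin, nsmul_eq_mul]
        push_cast
        ring

/-- Fourier coefficients of the difference of the empirical measures. -/
def dhat (n : ℕ) (u v : ℕ → Fin d → ZMod M) (m : Fin d → ZMod M) : ℂ :=
  (∑ k ∈ Finset.range n, (ech m (u k) - ech m (v k))) / n

lemma fourier_bound {N : ℕ} (hN : 0 < N) (hMN : M = 2 * N) (f : (Fin d → ZMod M) → ℝ)
    (hf : ∀ x i, |f (x + Pi.single i 1) - f x| ≤ 1 / N) (n : ℕ)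
    (u v : ℕ → Fin d → ZMod M) (t : ℝ) (ht : 0 < t) :
    (∑ k ∈ Finset.range n, (f (u k) - f (v k))) / n ≤
      d * t / 2 + (8 * t)⁻¹ * ∑ m, ‖dhat n u v m‖ ^ 2 / msq m := by
  have hN' : (0 : ℝ) < N := by exact_mod_cast hN
  have hM' : (M : ℝ) = 2 * N := by rw [hMN]; push_cast; ring
  have hM : (0 : ℝ) < M := by rw [hM']; positivity
  set Q : ℝ := (M : ℝ) ^ d with hQ
  have hQ0 : 0 < Q := by positivity
  set D : ℝ := (∑ k ∈ Finset.range n, (f (u k) - f (v k))) / n with hD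
  set F := fhat (fun x => (f x : ℂ)) with hF
  have key : (Q : ℂ) * (D : ℂ) = ∑ m, F m * dhat n u v m := by
    unfold dhat
    simp only [← mul_div_assoc, Finset.mul_sum, mul_sub]
    rw [← Finset.sum_div, Finset.sum_comm]
    simp only [Finset.sum_sub_distrib, hF, fhat_inv]
    rw [hD, hQ]
    push_cast
    rw [← mul_div_assoc, Finset.sum_sub_distrib, ← Finset.mul_sum, ← Finset.mul_sum, mul_sub]
  have h1 : Q * D ≤ ∑ m, ‖F m‖ * ‖dhat n u v m‖ := by
    calc Q * D ≤ ‖(Q : ℂ) * (D : ℂ)‖ := by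
          rw [← Complex.ofReal_mul, Complex.norm_real]; exact le_abs_self _
      _ ≤ _ := by
          rw [key]
          refine (norm_sum_le _ _).trans (Finset.sum_le_sum fun m _ => (norm_mul _ _).le)
  have h2 : ∀ m, ‖F m‖ * ‖dhat n u v m‖ ≤
      2 * t / Q * (msq m * ‖F m‖ ^ 2) + Q * ((8 * t)⁻¹ * (‖dhat n u v m‖ ^ 2 / msq m)) := by
    intro m
    by_cases hm : m = 0
    · subst hm
      have : dhat n u v 0 = 0 := by unfold dhat; simp [ech_zero_left]
      rw [this]; simp
      have := msq_nonneg (0 : Fin d → ZMod M)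
      positivity
    · have hp := msq_pos m hm
      have : 2 * t / Q * (msq m * ‖F m‖ ^ 2) + Q * ((8 * t)⁻¹ * (‖dhat n u v m‖ ^ 2 / msq m))
        - ‖F m‖ * ‖dhat n u v m‖ =
        2 * t * msq m / Q * (‖F m‖ - Q / (4 * t * msq m) * ‖dhat n u v m‖) ^ 2 := by
        field_simp
        ring
      have h3 : 0 ≤ 2 * t * msq m / Q * (‖F m‖ - Q / (4 * t * msq m) * ‖dhat n u v m‖) ^ 2 := by
        positivity
      linarith
  have h3 := fhat_grad f (1 / N) hf
  rw [← hF, ← hQ] at h3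
  have h4 : Q * D ≤ Q * (d * t / 2 + (8 * t)⁻¹ * ∑ m, ‖dhat n u v m‖ ^ 2 / msq m) := by
    refine h1.trans ((Finset.sum_le_sum fun m _ => h2 m).trans ?_)
    rw [Finset.sum_add_distrib, ← Finset.mul_sum, ← Finset.mul_sum, ← Finset.mul_sum, mul_add]
    refine add_le_add ?_ le_rfl
    calc 2 * t / Q * ∑ m, msq m * ‖F m‖ ^ 2
        ≤ 2 * t / Q * ((M : ℝ) ^ 2 / 16 * (Q * (d * (Q * (1 / (N : ℝ)) ^ 2)))) := by gcongr
      _ = _ := by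
        rw [hM']; field_simp; ring
  exact le_of_mul_le_mul_left h4 hQ0

end fourier

/-- Grid rounding. -/
def gr {d : ℕ} (N M : ℕ) (x : Fin d → ℝ) : Fin d → ZMod M :=
  fun i => ((⌊(N : ℝ) * x i⌋₊ : ℕ) : ZMod M)

/-- Unfolding the torus. -/
def unf {d : ℕ} (N : ℕ) {M : ℕ} (a : Fin d → ZMod M) : Fin d → ℝ :=
  fun i => ((a i).valMinAbs.natAbs : ℝ) / N

lemma l1d_comm {d : ℕ} (x y : Fin d → ℝ) : l1d x y = l1d y x := by
  unfold l1d; exact Finset.sum_congr rfl fun i _ => abs_sub_comm _ _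

lemma l1d_gr {d N M : ℕ} (hN : 0 < N) (hMN : M = 2 * N) (x : Fin d → ℝ)
    (hx : ∀ i, x i ∈ Set.Icc (0 : ℝ) 1) : l1d x (unf N (gr N M x)) ≤ d / N := by
  have hN' : (0 : ℝ) < N := by exact_mod_cast hN
  unfold l1d
  calc ∑ i, |x i - unf N (gr N M x) i| ≤ ∑ i : Fin d, (1 / (N : ℝ)) := by
        refine Finset.sum_le_sum fun i _ => ?_
        have h0 : 0 ≤ (N : ℝ) * x i := mul_nonneg hN'.le (hx i).1
        have h1 : ⌊(N : ℝ) * x i⌋₊ ≤ N := by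
          apply Nat.floor_le_of_le
          have := (hx i).2
          nlinarith
        have h2 : unf N (gr N M x) i = (⌊(N : ℝ) * x i⌋₊ : ℝ) / N := by
          unfold unf gr
          rw [ZMod.valMinAbs_natCast_of_le_half (by omega)]
          simp
        rw [h2]
        have h3 := Nat.floor_le h0
        have h4 := Nat.lt_floor_add_one ((N : ℝ) * x i)
        have h5 : x i - (⌊(N : ℝ) * x i⌋₊ : ℝ) / N = ((N : ℝ) * x i - ⌊(N : ℝ) * x i⌋₊) / N := by
          field_simp
        rw [h5, abs_div, abs_of_pos hN', abs_of_nonneg (by linarith)]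
        gcongr
        linarith
    _ = _ := by simp; ring

lemma natAbs_step {M : ℕ} [NeZero M] (a : ZMod M) :
    |((a + 1).valMinAbs.natAbs : ℝ) - (a.valMinAbs.natAbs : ℝ)| ≤ 1 := by
  have h1 : (1 : ZMod M).valMinAbs.natAbs ≤ 1 := by
    rcases Nat.lt_or_ge M 2 with h | h
    · have := ZMod.natAbs_valMinAbs_le (1 : ZMod M)
      omega
    · have := ZMod.valMinAbs_natCast_of_le_half (n := M) (a := 1) (by omega)
      rw [Nat.cast_one] at this
      rw [this]; simp
  have h1' : (-1 : ZMod M).valMinAbs.natAbs ≤ 1 := by rwa [ZMod.natAbs_valMinAbs_neg]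
  have h2 := ZMod.natAbs_valMinAbs_add_le a 1
  have h3 := ZMod.natAbs_valMinAbs_add_le (a + 1) (-1)
  rw [add_neg_cancel_right] at h3
  have h4 := Int.natAbs_add_le a.valMinAbs (1 : ZMod M).valMinAbs
  have h5 := Int.natAbs_add_le (a+1).valMinAbs (-1 : ZMod M).valMinAbs
  have h6 : (a + 1).valMinAbs.natAbs ≤ a.valMinAbs.natAbs + 1 := by omega
  have h7 : a.valMinAbs.natAbs ≤ (a + 1).valMinAbs.natAbs + 1 := by omega
  have h6' : ((a + 1).valMinAbs.natAbs : ℝ) ≤ a.valMinAbs.natAbs + 1 := by exact_mod_cast h6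
  have h7' : (a.valMinAbs.natAbs : ℝ) ≤ (a + 1).valMinAbs.natAbs + 1 := by exact_mod_cast h7
  rw [abs_le]; constructor <;> linarith

lemma l1d_unf {d N M : ℕ} [NeZero M] (a : Fin d → ZMod M) (i : Fin d) :
    l1d (unf N (a + Pi.single i 1)) (unf N a) ≤ 1 / N := by
  unfold l1d
  rw [Finset.sum_eq_single i]
  · unfold unf
    simp only [Pi.add_apply, Pi.single_eq_same]
    rw [← sub_div, abs_div, Nat.abs_cast]
    gcongr
    exact natAbs_step _
  · intro j _ hj
    simp [unf, hj]
  · simp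

lemma W1_pointwise {d N M n : ℕ} [NeZero M] (hN : 0 < N) (hMN : M = 2 * N) (hn : 0 < n)
    (x y : ℕ → Fin d → ℝ) (hx : ∀ k i, x k i ∈ Set.Icc (0 : ℝ) 1)
    (hy : ∀ k i, y k i ∈ Set.Icc (0 : ℝ) 1) (t : ℝ) (ht : 0 < t) :
    W1 ((n : ℝ≥0∞)⁻¹ • ∑ k ∈ Finset.range n, Measure.dirac (x k))
      ((n : ℝ≥0∞)⁻¹ • ∑ k ∈ Finset.range n, Measure.dirac (y k)) ≤ ENNReal.ofReal
      (2 * (d / N) + (d * t / 2 + (8 * t)⁻¹ *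
        ∑ m, ‖dhat n (fun k => gr N M (x k)) (fun k => gr N M (y k)) m‖ ^ 2 / msq m)) := by
  have hn' : (0 : ℝ) < n := by exact_mod_cast hn
  apply W1_le_of_lip hn
  intro F hF
  have h1 := fourier_bound hN hMN (fun a => F (unf N a)) (by
    intro a i
    rw [abs_le]
    have h1 := hF (unf N (a + Pi.single i 1)) (unf N a)
    have h2 := hF (unf N a) (unf N (a + Pi.single i 1))
    rw [l1d_comm] at h2
    have h3 := l1d_unf (N := N) a i
    constructor <;> linarith) n (fun k => gr N M (x k)) (fun k => gr N M (y k)) t ht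
  refine le_trans ?_ (add_le_add le_rfl h1)
  rw [div_le_iff₀ hn', add_mul, div_mul_cancel₀ _ hn'.ne']
  have : 2 * ((d : ℝ) / N) * n = ∑ k ∈ Finset.range n, 2 * ((d : ℝ) / N) := by
    simp; ring
  rw [this, ← Finset.sum_add_distrib]
  refine Finset.sum_le_sum fun k _ => ?_
  have a1 := hF (x k) (unf N (gr N M (x k)))
  have a2 := hF (unf N (gr N M (y k))) (y k)
  rw [l1d_comm] at a2
  have a3 := l1d_gr hN hMN (x k) (hx k)
  have a4 := l1d_gr hN hMN (y k) (hy k)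
  linarith

lemma card_natAbs_eq {M : ℕ} [NeZero M] (r : ℕ) :
    (Finset.univ.filter (fun a : ZMod M => a.valMinAbs.natAbs = r)).card ≤ 2 := by
  refine le_trans (Finset.card_le_card_of_injOn (t := ({(r : ℤ), -(r : ℤ)} : Finset ℤ))
    (fun a => a.valMinAbs) ?_ (ZMod.injective_valMinAbs.injOn)) Finset.card_le_two
  intro a ha
  simp at ha ⊢
  omega

lemma card_natAbs_le {M : ℕ} [NeZero M] (r : ℕ) :
    (Finset.univ.filter (fun a : ZMod M => a.valMinAbs.natAbs ≤ r)).card ≤ 2 * r + 1 := by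
  refine le_trans (Finset.card_le_card_of_injOn (t := Finset.Icc (-(r : ℤ)) r)
    (fun a => a.valMinAbs) ?_ (ZMod.injective_valMinAbs.injOn)) ?_
  · intro a ha
    simp at ha ⊢
    omega
  · simp; omega

lemma card_shell {d M : ℕ} [NeZero M] (i : Fin d) (r : ℕ) (hr : 1 ≤ r) :
    (Finset.univ.filter (fun m : Fin d → ZMod M => (m i).valMinAbs.natAbs = r ∧
      ∀ j, (m j).valMinAbs.natAbs ≤ r)).card ≤ 2 * (3 * r) ^ (d - 1) := by
  classical
  refine le_trans (Finset.card_le_card (t := Fintype.piFinset (fun j => if j = i then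
    Finset.univ.filter (fun a : ZMod M => a.valMinAbs.natAbs = r) else
    Finset.univ.filter (fun a : ZMod M => a.valMinAbs.natAbs ≤ r))) ?_) ?_
  · intro m hm
    simp only [Finset.mem_filter, Finset.mem_univ, true_and] at hm
    rw [Fintype.mem_piFinset]
    intro j
    split_ifs with h
    · subst h; simpa using hm.1
    · simpa using hm.2 j
  · rw [Fintype.card_piFinset, ← Finset.mul_prod_erase _ _ (Finset.mem_univ i), if_pos rfl]
    refine Nat.mul_le_mul (card_natAbs_eq r) ?_
    refine le_trans (Finset.prod_le_pow_card _ _ (3 * r) ?_) ?_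
    · intro j hj
      rw [if_neg (Finset.ne_of_mem_erase hj)]
      have := card_natAbs_le (M := M) r
      omega
    · rw [Finset.card_erase_of_mem (Finset.mem_univ i)]; simp

lemma sum_inv_msq {d N M : ℕ} [NeZero M] (hMN : M = 2 * N) :
    ∑ m : Fin d → ZMod M, 1 / msq m ≤
      d * (2 * 3 ^ (d - 1)) * ∑ r ∈ Finset.Icc 1 N, (r : ℝ) ^ (d - 1) / (r : ℝ) ^ 2 := by
  classical
  calc ∑ m : Fin d → ZMod M, 1 / msq m
      ≤ ∑ m : Fin d → ZMod M, ∑ i : Fin d, ∑ r ∈ Finset.Icc 1 N,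
        if ((m i).valMinAbs.natAbs = r ∧ ∀ j, (m j).valMinAbs.natAbs ≤ r) then
          1 / (r : ℝ) ^ 2 else 0 := by
        refine Finset.sum_le_sum fun m _ => ?_
        by_cases hm : m = 0
        · subst hm
          have : msq (0 : Fin d → ZMod M) = 0 := by simp [msq]
          rw [this, _root_.div_zero]
          refine Finset.sum_nonneg fun i _ => Finset.sum_nonneg fun r _ => ?_
          split_ifs <;> positivity
        · obtain ⟨i0, hi0⟩ := Function.ne_iff.1 hm
          obtain ⟨i, -, hi⟩ := Finset.exists_max_image Finset.univ
            (fun j => (m j).valMinAbs.natAbs) ⟨i0, Finset.mem_univ i0⟩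
          have hpos : 1 ≤ (m i).valMinAbs.natAbs := by
            refine le_trans ?_ (hi i0 (Finset.mem_univ _))
            have : (m i0).valMinAbs ≠ 0 := by
              rw [Ne, ZMod.valMinAbs_eq_zero]; exact hi0
            omega
          have hle : (m i).valMinAbs.natAbs ≤ N := by
            have := ZMod.natAbs_valMinAbs_le (m i)
            omega
          refine le_trans ?_ (Finset.single_le_sum (a := i) (fun i _ =>
            Finset.sum_nonneg fun r _ => by split_ifs <;> positivity) (Finset.mem_univ i))
          refine le_trans ?_ (Finset.single_le_sum (a := (m i).valMinAbs.natAbs) (fun r _ =>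
            by split_ifs <;> positivity) (Finset.mem_Icc.2 ⟨hpos, hle⟩))
          rw [if_pos ⟨rfl, fun j => hi j (Finset.mem_univ j)⟩]
          have h1 : (((m i).valMinAbs.natAbs : ℝ)) ^ 2 = ((m i).valMinAbs : ℝ) ^ 2 := by
            rw [Nat.cast_natAbs, Int.cast_abs, sq_abs]
          have h2 : (1 : ℝ) ≤ (m i).valMinAbs.natAbs := by exact_mod_cast hpos
          apply one_div_le_one_div_of_le (by positivity)
          rw [h1]
          exact Finset.single_le_sum (f := fun i => ((m i).valMinAbs : ℝ) ^ 2)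
            (fun j _ => sq_nonneg _) (Finset.mem_univ i)
    _ = ∑ i : Fin d, ∑ r ∈ Finset.Icc 1 N,
        ((Finset.univ.filter (fun m : Fin d → ZMod M => (m i).valMinAbs.natAbs = r ∧
          ∀ j, (m j).valMinAbs.natAbs ≤ r)).card : ℝ) * (1 / (r : ℝ) ^ 2) := by
        rw [Finset.sum_comm]
        refine Finset.sum_congr rfl fun i _ => ?_
        rw [Finset.sum_comm]
        refine Finset.sum_congr rfl fun r _ => ?_
        rw [← Finset.sum_filter, Finset.sum_const, nsmul_eq_mul]
    _ ≤ ∑ i : Fin d, ∑ r ∈ Finset.Icc 1 N,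
        (2 * 3 ^ (d - 1)) * ((r : ℝ) ^ (d - 1) / (r : ℝ) ^ 2) := by
        refine Finset.sum_le_sum fun i _ => Finset.sum_le_sum fun r hr => ?_
        have h1 := card_shell (M := M) i r (Finset.mem_Icc.1 hr).1
        have h2 : ((Finset.univ.filter (fun m : Fin d → ZMod M => (m i).valMinAbs.natAbs = r ∧
          ∀ j, (m j).valMinAbs.natAbs ≤ r)).card : ℝ) ≤ 2 * (3 * r) ^ (d - 1) := by
          exact_mod_cast h1
        calc _ ≤ 2 * (3 * (r : ℝ)) ^ (d - 1) * (1 / (r : ℝ) ^ 2) := by gcongr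
          _ = _ := by rw [mul_pow]; ring
    _ = _ := by
        simp only [← Finset.mul_sum, Finset.sum_const, Finset.card_univ, Fintype.card_fin,
          nsmul_eq_mul]
        ring

lemma sum_norm_le_of_partial {T : Type*} [Fintype T] (L : T → ℂ) (K : ℝ)
    (h : ∀ S : Finset T, ‖∑ a ∈ S, L a‖ ≤ K) : ∑ a, ‖L a‖ ≤ 4 * K := by
  classical
  have real : ∀ R : T → ℝ, (∀ S : Finset T, |∑ a ∈ S, R a| ≤ K) → ∑ a, |R a| ≤ 2 * K := by
    intro R hR
    rw [← Finset.sum_filter_add_sum_filter_not Finset.univ (fun a => 0 ≤ R a)]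
    have h1 : ∑ a with 0 ≤ R a, |R a| = ∑ a with 0 ≤ R a, R a :=
      Finset.sum_congr rfl fun a ha => abs_of_nonneg (Finset.mem_filter.1 ha).2
    have h2 : ∑ a with ¬ 0 ≤ R a, |R a| = - ∑ a with ¬ 0 ≤ R a, R a := by
      rw [← Finset.sum_neg_distrib]
      exact Finset.sum_congr rfl fun a ha =>
        abs_of_nonpos (not_le.1 (Finset.mem_filter.1 ha).2).le
    rw [h1, h2]
    have h3 := hR (Finset.univ.filter fun a => 0 ≤ R a)
    have h4 := hR (Finset.univ.filter fun a => ¬ 0 ≤ R a)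
    rw [abs_le] at h3 h4
    linarith [h3.2, h4.1]
  have hre := real (fun a => (L a).re) (fun S => by
    rw [← Complex.re_sum]; exact (Complex.abs_re_le_norm _).trans (h S))
  have him := real (fun a => (L a).im) (fun S => by
    rw [← Complex.im_sum]; exact (Complex.abs_im_le_norm _).trans (h S))
  calc ∑ a, ‖L a‖ ≤ ∑ a, (|(L a).re| + |(L a).im|) :=
        Finset.sum_le_sum fun a _ => Complex.norm_le_abs_re_add_abs_im _
    _ ≤ _ := by rw [Finset.sum_add_distrib]; linarith

lemma bilin_bound {T : Type*} [Fintype T] (c : T → T → ℝ) (K B : ℝ) (hB : 0 ≤ B)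
    (h : ∀ S S' : Finset T, |∑ a ∈ S, ∑ b ∈ S', c a b| ≤ K) (f g : T → ℂ)
    (hf : ∀ a, ‖f a‖ ≤ B) (hg : ∀ a, ‖g a‖ ≤ B) :
    ‖∑ a, ∑ b, f a * g b * (c a b : ℂ)‖ ≤ 16 * B ^ 2 * K := by
  have aux : ∀ (u : T → ℂ) (L : T → ℂ) (K : ℝ), (∀ a, ‖u a‖ ≤ B) →
      (∀ S : Finset T, ‖∑ a ∈ S, L a‖ ≤ K) → ‖∑ a, u a * L a‖ ≤ 4 * B * K := by
    intro u L K hu hL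
    have := sum_norm_le_of_partial L K hL
    calc ‖∑ a, u a * L a‖ ≤ ∑ a, B * ‖L a‖ := by
          refine (norm_sum_le _ _).trans (Finset.sum_le_sum fun a _ => ?_)
          rw [norm_mul]; gcongr; exact hu a
      _ ≤ _ := by rw [← Finset.mul_sum]; nlinarith
  have e : ∑ a, ∑ b, f a * g b * (c a b : ℂ) = ∑ a, f a * ∑ b, g b * (c a b : ℂ) := by
    refine Finset.sum_congr rfl fun a _ => ?_
    rw [Finset.mul_sum]
    exact Finset.sum_congr rfl fun b _ => by ring
  rw [e]
  refine (aux f _ (4 * B * K) hf ?_).trans (by nlinarith)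
  intro S
  rw [Finset.sum_comm]
  simp only [← Finset.mul_sum]
  refine aux g _ K hg ?_
  intro S'
  rw [Finset.sum_comm]
  have := h S S'
  rw [← Real.norm_eq_abs, ← Complex.norm_real] at this
  push_cast at this
  exact this

section cov
variable {Ω : Type} [MeasurableSpace Ω] (P : Measure Ω) [IsProbabilityMeasure P]
  {T : Type} [Fintype T] [MeasurableSpace T] [DiscreteMeasurableSpace T]

lemma integral_fin (U : Ω → T) (hU : Measurable U) (f : T → ℂ) :
    ∫ ω, f (U ω) ∂P = ∑ a, f a * (P.real (U ⁻¹' {a}) : ℂ) := by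
  have : IsProbabilityMeasure (P.map U) := Measure.isProbabilityMeasure_map hU.aemeasurable
  rw [← integral_map hU.aemeasurable (f := f) (Measurable.of_discrete.aestronglyMeasurable),
    integral_fintype (Integrable.of_finite)]
  refine Finset.sum_congr rfl fun a _ => ?_
  rw [map_measureReal_apply hU (measurableSet_singleton a), Complex.real_smul, mul_comm]

lemma cov_bound (U V : Ω → T) (hU : Measurable U) (hV : Measurable V) (K B : ℝ) (hB : 0 ≤ B)
    (h : ∀ S S' : Set T,
      |P.real (U ⁻¹' S ∩ V ⁻¹' S') - P.real (U ⁻¹' S) * P.real (V ⁻¹' S')| ≤ K)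
    (f g : T → ℂ) (hf : ∀ a, ‖f a‖ ≤ B) (hg : ∀ a, ‖g a‖ ≤ B) :
    ‖∫ ω, f (U ω) * g (V ω) ∂P - (∫ ω, f (U ω) ∂P) * ∫ ω, g (V ω) ∂P‖ ≤ 16 * B ^ 2 * K := by
  classical
  have e1 := integral_fin P (fun ω => (U ω, V ω)) (hU.prodMk hV) (fun p => f p.1 * g p.2)
  simp only at e1
  rw [e1, integral_fin P U hU, integral_fin P V hV, Fintype.sum_prod_type, Finset.sum_mul_sum,
    ← Finset.sum_sub_distrib]
  simp only [← Finset.sum_sub_distrib]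
  have hpre : ∀ a b, (fun ω => (U ω, V ω)) ⁻¹' {(a, b)} = U ⁻¹' {a} ∩ V ⁻¹' {b} := by
    intro a b; ext ω; simp
  convert bilin_bound (fun a b => P.real (U ⁻¹' {a} ∩ V ⁻¹' {b}) -
    P.real (U ⁻¹' {a}) * P.real (V ⁻¹' {b})) K B hB ?_ f g hf hg using 4 with a _ b _
  · rw [hpre]; push_cast; ring
  · intro S S'
    have hs : ∀ (U : Ω → T), Measurable U → ∀ S : Finset T, ∀ W : Set Ω, MeasurableSet W →
        ∑ a ∈ S, P.real (U ⁻¹' {a} ∩ W) = P.real (U ⁻¹' S ∩ W) := by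
      intro U hU S W hW
      rw [← measureReal_biUnion_finset]
      · congr 1
        ext ω; simp
      · intro a _ b _ hab
        rw [Function.onFun, Set.disjoint_left]
        rintro ω ⟨h1, _⟩ ⟨h2, _⟩
        apply hab
        simp at h1 h2
        rw [← h1, ← h2]
      · intro a _
        exact (hU (measurableSet_singleton a)).inter hW
    have hs' : ∀ (U : Ω → T), Measurable U → ∀ S : Finset T,
        ∑ a ∈ S, P.real (U ⁻¹' {a}) = P.real (U ⁻¹' S) := by
      intro U hU S
      simpa using hs U hU S Set.univ MeasurableSet.univ
    have : ∑ a ∈ S, ∑ b ∈ S', (P.real (U ⁻¹' {a} ∩ V ⁻¹' {b}) -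
        P.real (U ⁻¹' {a}) * P.real (V ⁻¹' {b})) =
        P.real (U ⁻¹' S ∩ V ⁻¹' S') - P.real (U ⁻¹' S) * P.real (V ⁻¹' S') := by
      simp only [Finset.sum_sub_distrib]
      rw [← Finset.sum_mul_sum, hs' U hU, hs' V hV]
      congr 1
      rw [Set.inter_comm, ← hs V hV S' (U ⁻¹' S) (hU (S : Set T).toFinite.measurableSet),
        Finset.sum_comm]
      refine Finset.sum_congr rfl fun b _ => ?_
      rw [Set.inter_comm (V ⁻¹' {b}), ← hs U hU S _ (hV (measurableSet_singleton b))]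
    rw [this]
    exact h S S'

end cov

lemma sum_dist_bound (a : ℕ → ℝ) (ha : ∀ i, 0 ≤ a i) (hs : Summable a) (n j : ℕ) :
    ∑ k ∈ Finset.range n, (if k = j then 0 else a (Nat.dist j k - 1)) ≤ 2 * ∑' i, a i := by
  set f : ℕ → ℝ := fun k => if k = j then 0 else a (Nat.dist j k - 1) with hf
  have hf0 : ∀ k, 0 ≤ f k := by
    intro k; simp only [hf]; split_ifs; exacts [le_rfl, ha _]
  calc ∑ k ∈ Finset.range n, f k ≤ ∑ k ∈ Finset.range (j + 1 + n), f k :=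
        Finset.sum_le_sum_of_subset_of_nonneg (Finset.range_mono (by omega)) fun i _ _ => hf0 i
    _ = ∑ k ∈ Finset.range j, a (j - 1 - k) + ∑ i ∈ Finset.range n, a i := by
        rw [Finset.sum_range_add, Finset.sum_range_succ]
        congr 1
        · have : f j = 0 := by simp [hf]
          rw [this, add_zero]
          refine Finset.sum_congr rfl fun k hk => ?_
          have := Finset.mem_range.1 hk
          simp only [hf]
          rw [if_neg (by omega)]
          congr 1
          unfold Nat.dist
          omega
        · refine Finset.sum_congr rfl fun k hk => ?_
          simp only [hf]
          rw [if_neg (by omega)]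
          congr 1
          unfold Nat.dist
          omega
    _ ≤ _ := by
        rw [Finset.sum_range_reflect]
        have h1 := hs.sum_le_tsum (Finset.range j) fun i _ => ha i
        have h2 := hs.sum_le_tsum (Finset.range n) fun i _ => ha i
        linarith

lemma second_moment {Ω : Type} [MeasurableSpace Ω] (P : Measure Ω) [IsProbabilityMeasure P]
    (ξ : ℕ → Ω → ℂ) (hm : ∀ k, Measurable (ξ k)) (hb : ∀ k ω, ‖ξ k ω‖ ≤ 2)
    (a : ℕ → ℝ) (ha : ∀ i, 0 ≤ a i) (hs : Summable a)
    (hc : ∀ j k, j ≠ k → ‖∫ ω, ξ j ω * (starRingEnd ℂ) (ξ k ω) ∂P‖ ≤ 64 * a (Nat.dist j k - 1))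
    (n : ℕ) (hn : 0 < n) :
    Integrable (fun ω => ‖(∑ k ∈ Finset.range n, ξ k ω) / n‖ ^ 2) P ∧
    ∫ ω, ‖(∑ k ∈ Finset.range n, ξ k ω) / n‖ ^ 2 ∂P ≤ (4 + 128 * ∑' i, a i) / n := by
  have hn' : (0 : ℝ) < n := by exact_mod_cast hn
  have hint : ∀ j k, Integrable (fun ω => ξ j ω * (starRingEnd ℂ) (ξ k ω)) P := by
    intro j k
    refine Integrable.of_bound (C := 4) ?_ ?_
    · exact ((hm j).mul (Complex.continuous_conj.measurable.comp (hm k))).aestronglyMeasurable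
    · filter_upwards with ω
      rw [norm_mul, RCLike.norm_conj]
      have := hb j ω
      have := hb k ω
      nlinarith [norm_nonneg (ξ j ω), norm_nonneg (ξ k ω)]
  have e : ∀ ω, ‖(∑ k ∈ Finset.range n, ξ k ω) / n‖ ^ 2 =
      (n ^ 2 : ℝ)⁻¹ * Complex.re (∑ j ∈ Finset.range n, ∑ k ∈ Finset.range n,
        ξ j ω * (starRingEnd ℂ) (ξ k ω)) := by
    intro ω
    rw [← Finset.sum_mul_sum, ← map_sum, Complex.mul_conj', norm_div, div_pow]
    norm_cast
    simp
    ring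
  have hint2 : Integrable (fun ω => ∑ j ∈ Finset.range n, ∑ k ∈ Finset.range n,
        ξ j ω * (starRingEnd ℂ) (ξ k ω)) P :=
    integrable_finsetSum _ fun j _ => integrable_finsetSum _ fun k _ => hint j k
  simp only [e]
  refine ⟨(hint2.re).const_mul _, ?_⟩
  rw [integral_const_mul]
  have e2 : ∫ ω, Complex.re (∑ j ∈ Finset.range n, ∑ k ∈ Finset.range n,
        ξ j ω * (starRingEnd ℂ) (ξ k ω)) ∂P = Complex.re (∑ j ∈ Finset.range n,
        ∑ k ∈ Finset.range n, ∫ ω, ξ j ω * (starRingEnd ℂ) (ξ k ω) ∂P) := by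
    have := integral_re hint2
    simp only [RCLike.re_eq_complex_re] at this
    rw [this, integral_finsetSum _ fun j _ => integrable_finsetSum _ fun k _ => hint j k]
    congr 1
    refine Finset.sum_congr rfl fun j _ => ?_
    rw [integral_finsetSum _ fun k _ => hint j k]
  rw [e2]
  have hbd : ∀ j k, ‖∫ ω, ξ j ω * (starRingEnd ℂ) (ξ k ω) ∂P‖ ≤
      (if k = j then 4 else 0) + 64 * (if k = j then 0 else a (Nat.dist j k - 1)) := by
    intro j k
    split_ifs with h
    · subst h
      refine (norm_integral_le_of_norm_le_const (C := 4) ?_).trans (by simp)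
      filter_upwards with ω
      rw [norm_mul, RCLike.norm_conj]
      have := hb k ω
      nlinarith [norm_nonneg (ξ k ω)]
    · simpa using hc j k (Ne.symm h)
  have h1 : Complex.re (∑ j ∈ Finset.range n,
        ∑ k ∈ Finset.range n, ∫ ω, ξ j ω * (starRingEnd ℂ) (ξ k ω) ∂P) ≤
        ∑ j ∈ Finset.range n, (4 + 64 * (2 * ∑' i, a i)) := by
    refine (Complex.re_le_norm _).trans ((norm_sum_le _ _).trans (Finset.sum_le_sum fun j hj => ?_))
    refine (norm_sum_le _ _).trans ((Finset.sum_le_sum fun k _ => hbd j k).trans ?_)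
    rw [Finset.sum_add_distrib, ← Finset.mul_sum]
    have h2 := sum_dist_bound a ha hs n j
    have h3 : ∑ k ∈ Finset.range n, (if k = j then (4 : ℝ) else 0) = 4 := by
      rw [Finset.sum_ite_eq' , if_pos hj]
    rw [h3]
    linarith
  rw [Finset.sum_const, Finset.card_range, nsmul_eq_mul] at h1
  calc _ ≤ (n ^ 2 : ℝ)⁻¹ * (n * (4 + 64 * (2 * ∑' i, a i))) := by gcongr
    _ = _ := by field_simp; ring

section mixing
variable {Ω : Type} [MeasurableSpace Ω] (P : Measure Ω) [IsProbabilityMeasure P]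

lemma alpha_term_le (A B : Set Ω) :
    |(P (A ∩ B)).toReal - (P A).toReal * (P B).toReal| ≤ 1 := by
  have h1 : (P (A ∩ B)).toReal ≤ 1 := measureReal_le_one
  have h2 : (P A).toReal ≤ 1 := measureReal_le_one
  have h3 : (P B).toReal ≤ 1 := measureReal_le_one
  have h4 : 0 ≤ (P (A ∩ B)).toReal := ENNReal.toReal_nonneg
  have h5 : 0 ≤ (P A).toReal := ENNReal.toReal_nonneg
  have h6 : 0 ≤ (P B).toReal := ENNReal.toReal_nonneg
  rw [abs_le]; constructor <;> nlinarith

lemma le_rosenblatt {Ω : Type} (m1 m2 : MeasurableSpace Ω) [MeasurableSpace Ω] (P : Measure Ω)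
    [IsProbabilityMeasure P] (A B : Set Ω) (hA : MeasurableSet[m1] A)
    (hB : MeasurableSet[m2] B) :
    |(P (A ∩ B)).toReal - (P A).toReal * (P B).toReal| ≤ rosenblattAlpha P m1 m2 := by
  refine le_csSup ⟨1, ?_⟩ ⟨A, B, hA, hB, rfl⟩
  rintro r ⟨A, B, -, -, rfl⟩
  exact alpha_term_le P A B

lemma rosenblatt_nonneg {Ω : Type} (m1 m2 : MeasurableSpace Ω) [MeasurableSpace Ω] (P : Measure Ω)
    [IsProbabilityMeasure P] : 0 ≤ rosenblattAlpha P m1 m2 := by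
  apply Real.sSup_nonneg
  rintro r ⟨A, B, -, -, rfl⟩
  positivity

lemma rosenblatt_le {Ω : Type} (m1 m2 : MeasurableSpace Ω) [MeasurableSpace Ω] (P : Measure Ω)
    [IsProbabilityMeasure P] : rosenblattAlpha P m1 m2 ≤ 1 := by
  refine Real.sSup_le ?_ zero_le_one
  rintro r ⟨A, B, -, -, rfl⟩
  exact alpha_term_le P A B

lemma mixing_nonneg {E : Type*} [MeasurableSpace E] (Z : ℕ → Ω → E) (l : ℕ) :
    0 ≤ mixingSeq P Z l := by
  apply Real.sSup_nonneg
  rintro r ⟨j, k, -, rfl⟩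
  exact rosenblatt_nonneg _ _ P

lemma le_mixing {E : Type*} [MeasurableSpace E] (Z : ℕ → Ω → E) (l j k : ℕ)
    (h : l ≤ Nat.dist j k) (S S' : Set E) (hS : MeasurableSet S) (hS' : MeasurableSet S') :
    |P.real (Z j ⁻¹' S ∩ Z k ⁻¹' S') - P.real (Z j ⁻¹' S) * P.real (Z k ⁻¹' S')| ≤
      mixingSeq P Z l := by
  refine (le_rosenblatt (MeasurableSpace.comap (Z j) inferInstance)
    (MeasurableSpace.comap (Z k) inferInstance) P _ _ ⟨S, hS, rfl⟩ ⟨S', hS', rfl⟩).trans ?_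
  refine le_csSup ⟨1, ?_⟩ ⟨j, k, h, rfl⟩
  rintro r ⟨j, k, -, rfl⟩
  exact rosenblatt_le _ _ P

end mixing

lemma measurable_gr {d : ℕ} (N M : ℕ) [NeZero M] :
    Measurable (gr N M : (Fin d → ℝ) → (Fin d → ZMod M)) := by
  rw [measurable_pi_iff]
  intro i
  unfold gr
  have h1 : Measurable (fun x : Fin d → ℝ => ⌊(N : ℝ) * x i⌋₊) :=
    Nat.measurable_floor.comp ((measurable_pi_apply i).const_mul _)
  exact (Measurable.of_discrete (f := fun k : ℕ => (k : ZMod M))).comp h1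

lemma mean_bound {d : ℕ} (A : ℝ) {Ω : Type} [MeasurableSpace Ω] (P : Measure Ω)
    [IsProbabilityMeasure P] (X Y : ℕ → Ω → (Fin d → ℝ))
    (hX : ∀ k, Measurable (X k)) (hY : ∀ k, Measurable (Y k))
    (hX1 : ∀ k ω i, X k ω i ∈ Set.Icc (0 : ℝ) 1)
    (hY1 : ∀ k ω i, Y k ω i ∈ Set.Icc (0 : ℝ) 1)
    (hXY : ∀ k, P.map (X k) = P.map (Y k))
    (hs : Summable (fun ℓ => mixingSeq P (fun k ω => (X k ω, Y k ω)) (ℓ + 1)))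
    (hA : (∑' ℓ : ℕ, mixingSeq P (fun k ω => (X k ω, Y k ω)) (ℓ + 1)) ≤ A)
    (n : ℕ) (hn : 0 < n) (N : ℕ) (hN : 0 < N) (t : ℝ) (ht : 0 < t) :
    ∫⁻ ω, W1 (empMeasure X n ω) (empMeasure Y n ω) ∂P ≤ ENNReal.ofReal
      (2 * (d / N) + (d * t / 2 + (8 * t)⁻¹ * ((4 + 128 * |A|) / n *
        (d * (2 * 3 ^ (d - 1)) * ∑ r ∈ Finset.Icc 1 N, (r : ℝ) ^ (d - 1) / (r : ℝ) ^ 2)))) := by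
  have hn' : (0 : ℝ) < n := by exact_mod_cast hn
  obtain ⟨M, hMN⟩ : ∃ M, M = 2 * N := ⟨_, rfl⟩
  have : NeZero M := ⟨by omega⟩
  set u : Ω → ℕ → Fin d → ZMod M := fun ω k => gr N M (X k ω) with hu
  set v : Ω → ℕ → Fin d → ZMod M := fun ω k => gr N M (Y k ω) with hv
  have hum : ∀ k, Measurable (fun ω => u ω k) := fun k => (measurable_gr N M).comp (hX k)
  have hvm : ∀ k, Measurable (fun ω => v ω k) := fun k => (measurable_gr N M).comp (hY k)
  set a : ℕ → ℝ := fun ℓ => mixingSeq P (fun k ω => (X k ω, Y k ω)) (ℓ + 1) with ha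
  have ha0 : ∀ i, 0 ≤ a i := fun i => mixing_nonneg P _ _
  have hmom : ∀ m : Fin d → ZMod M,
      Integrable (fun ω => ‖dhat n (u ω) (v ω) m‖ ^ 2) P ∧
      ∫ ω, ‖dhat n (u ω) (v ω) m‖ ^ 2 ∂P ≤ (4 + 128 * ∑' i, a i) / n := by
    intro m
    set h : (Fin d → ZMod M) × (Fin d → ZMod M) → ℂ := fun p => ech m p.1 - ech m p.2 with hh
    have hb : ∀ p, ‖h p‖ ≤ 2 := by
      intro p
      refine (norm_sub_le _ _).trans ?_
      rw [ech_norm, ech_norm]; norm_num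
    have hq : ∀ k, Measurable (fun ω => (u ω k, v ω k)) := fun k => (hum k).prodMk (hvm k)
    have hmean : ∀ k, ∫ ω, h (u ω k, v ω k) ∂P = 0 := by
      intro k
      simp only [hh]
      have hme : Measurable (ech m) := Measurable.of_discrete
      have hi : ∀ w : Ω → Fin d → ZMod M, Measurable w → Integrable (fun ω => ech m (w ω)) P := by
        intro w hw
        refine Integrable.of_bound (C := 1) (hme.comp hw).aestronglyMeasurable ?_
        filter_upwards with ω
        rw [ech_norm]
      rw [integral_sub (hi _ (hum k)) (hi _ (hvm k)), sub_eq_zero]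
      have hg : Measurable (fun x => ech m (gr N M x)) := hme.comp (measurable_gr N M)
      have e1 := integral_map (μ := P) (hX k).aemeasurable (f := fun x => ech m (gr N M x))
        hg.aestronglyMeasurable
      have e2 := integral_map (μ := P) (hY k).aemeasurable (f := fun x => ech m (gr N M x))
        hg.aestronglyMeasurable
      simp only [hu, hv]
      rw [← e1, ← e2, hXY k]
    refine second_moment P (fun k ω => h (u ω k, v ω k))
      (fun k => (Measurable.of_discrete (f := h)).comp (hq k)) (fun k ω => hb _) a ha0 hs ?_ n hn
    intro j k hjk
    have hpos : 0 < Nat.dist j k := Nat.dist_pos_of_ne hjk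
    have := cov_bound P (fun ω => (u ω j, v ω j)) (fun ω => (u ω k, v ω k)) (hq j) (hq k)
      (a (Nat.dist j k - 1)) 2 (by norm_num) (by
        intro S S'
        have hgm : Measurable (fun p : (Fin d → ℝ) × (Fin d → ℝ) => (gr N M p.1, gr N M p.2)) :=
          ((measurable_gr N M).comp measurable_fst).prodMk
            ((measurable_gr N M).comp measurable_snd)
        exact le_mixing P (fun k ω => (X k ω, Y k ω)) (Nat.dist j k - 1 + 1) j k (by omega)
          ((fun p : (Fin d → ℝ) × (Fin d → ℝ) => (gr N M p.1, gr N M p.2)) ⁻¹' S)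
          ((fun p : (Fin d → ℝ) × (Fin d → ℝ) => (gr N M p.1, gr N M p.2)) ⁻¹' S')
          (hgm (S.toFinite.measurableSet)) (hgm (S'.toFinite.measurableSet)))
      h (fun p => (starRingEnd ℂ) (h p)) hb (fun p => by rw [RCLike.norm_conj]; exact hb p)
    rw [hmean j, zero_mul, sub_zero] at this
    refine this.trans (le_of_eq ?_)
    ring
  have hB : (4 + 128 * ∑' i, a i) / n ≤ (4 + 128 * |A|) / n := by
    have := le_abs_self A
    gcongr
    exact hA.trans this
  set f : Ω → ℝ := fun ω => 2 * ((d : ℝ) / N) + (d * t / 2 + (8 * t)⁻¹ *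
    ∑ m, ‖dhat n (u ω) (v ω) m‖ ^ 2 / msq m) with hf
  have hi1 : Integrable (fun ω => ∑ m, ‖dhat n (u ω) (v ω) m‖ ^ 2 / msq m) P :=
    integrable_finsetSum _ fun m _ => (hmom m).1.div_const _
  have hi2 : Integrable (fun ω => d * t / 2 + (8 * t)⁻¹ *
    ∑ m, ‖dhat n (u ω) (v ω) m‖ ^ 2 / msq m) P := (integrable_const _).add (hi1.const_mul _)
  have hfi : Integrable f P := (integrable_const _).add hi2
  have hf0 : ∀ ω, 0 ≤ f ω := by
    intro ω
    have : 0 ≤ ∑ m, ‖dhat n (u ω) (v ω) m‖ ^ 2 / msq m :=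
      Finset.sum_nonneg fun m _ => div_nonneg (by positivity) (msq_nonneg m)
    simp only [hf]
    positivity
  calc ∫⁻ ω, W1 (empMeasure X n ω) (empMeasure Y n ω) ∂P
      ≤ ∫⁻ ω, ENNReal.ofReal (f ω) ∂P := lintegral_mono fun ω =>
        W1_pointwise hN hMN hn (fun k => X k ω) (fun k => Y k ω) (fun k i => hX1 k ω i)
          (fun k i => hY1 k ω i) t ht
    _ = ENNReal.ofReal (∫ ω, f ω ∂P) :=
        (ofReal_integral_eq_lintegral_ofReal hfi (Filter.Eventually.of_forall hf0)).symm
    _ ≤ _ := by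
        apply ENNReal.ofReal_le_ofReal
        simp only [hf]
        rw [integral_add (integrable_const _) hi2, integral_add (integrable_const _)
          (hi1.const_mul _), integral_const_mul (8 * t)⁻¹,
          integral_finsetSum _ fun m _ => (hmom m).1.div_const _]
        simp only [integral_const, probReal_univ, one_smul]
        gcongr
        calc ∑ m, ∫ ω, ‖dhat n (u ω) (v ω) m‖ ^ 2 / msq m ∂P
            ≤ ∑ m : Fin d → ZMod M, (4 + 128 * |A|) / n * (1 / msq m) := by
              refine Finset.sum_le_sum fun m _ => ?_
              rw [integral_div, mul_one_div]
              exact div_le_div_of_nonneg_right ((hmom m).2.trans hB) (msq_nonneg m)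
          _ ≤ _ := by
              rw [← Finset.mul_sum]
              gcongr
              exact sum_inv_msq hMN

lemma sum_inv_sq_le (N : ℕ) :
    ∑ r ∈ Finset.Icc 1 N, (r : ℝ) ^ (1 - 1) / (r : ℝ) ^ 2 ≤ 2 - 1 / N := by
  induction N with
  | zero => simp
  | succ N ih =>
    rw [Finset.sum_Icc_succ_top (by omega)]
    rcases Nat.eq_zero_or_pos N with h | h
    · subst h; norm_num
    · have hN : (0 : ℝ) < N := by exact_mod_cast h
      have : 1 / ((N : ℝ) + 1) ^ 2 ≤ 1 / N - 1 / (N + 1) := by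
        rw [div_sub_div _ _ (by positivity) (by positivity), div_le_div_iff₀ (by positivity) (by positivity)]
        nlinarith
      push_cast
      simp only [Nat.sub_self, pow_zero] at ih ⊢
      linarith

lemma sum_inv_le (N : ℕ) :
    ∑ r ∈ Finset.Icc 1 N, (r : ℝ) ^ (2 - 1) / (r : ℝ) ^ 2 ≤ 1 + Real.log N := by
  have h := harmonic_le_one_add_log N
  rw [harmonic_eq_sum_Icc] at h
  push_cast at h
  refine le_trans (le_of_eq ?_) h
  refine Finset.sum_congr rfl fun r hr => ?_
  have : (0 : ℝ) < r := by exact_mod_cast (Finset.mem_Icc.1 hr).1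
  norm_num
  field_simp

lemma sum_pow_le (d N : ℕ) (hd : 3 ≤ d) :
    ∑ r ∈ Finset.Icc 1 N, (r : ℝ) ^ (d - 1) / (r : ℝ) ^ 2 ≤ (N : ℝ) ^ (d - 2) := by
  calc ∑ r ∈ Finset.Icc 1 N, (r : ℝ) ^ (d - 1) / (r : ℝ) ^ 2
      ≤ ∑ r ∈ Finset.Icc 1 N, (N : ℝ) ^ (d - 3) := by
        refine Finset.sum_le_sum fun r hr => ?_
        obtain ⟨h1, h2⟩ := Finset.mem_Icc.1 hr
        have : (0 : ℝ) < r := by exact_mod_cast h1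
        rw [show d - 1 = (d - 3) + 2 by omega, pow_add, mul_div_cancel_right₀ _ (by positivity)]
        gcongr
    _ = _ := by
        rw [show d - 2 = (d - 3) + 1 by omega, pow_succ]
        simp
        ring

/-- Corollary 4: under a summable mixing sequence, the rates of Theorem 3 remain
valid, with a constant depending only on `d` and on the sum of the mixing
coefficients. -/
theorem expected_W1_rate_mixing (d : ℕ) (A : ℝ) :
    ∃ C : ℝ, 0 < C ∧
      ∀ (Ω : Type) (_ : MeasurableSpace Ω) (P : Measure Ω), IsProbabilityMeasure P →
      ∀ (X Y : ℕ → Ω → (Fin d → ℝ)),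
        (∀ k, Measurable (X k)) → (∀ k, Measurable (Y k)) →
        (∀ k ω i, X k ω i ∈ Set.Icc (0 : ℝ) 1) →
        (∀ k ω i, Y k ω i ∈ Set.Icc (0 : ℝ) 1) →
        (∀ k, P.map (X k) = P.map (Y k)) →
        Summable (fun ℓ => mixingSeq P (fun k ω => (X k ω, Y k ω)) (ℓ + 1)) →
        (∑' ℓ : ℕ, mixingSeq P (fun k ω => (X k ω, Y k ω)) (ℓ + 1)) ≤ A →
        ∀ (n : ℕ), 2 ≤ n →
          (d = 1 →
            ∫⁻ ω, W1 (empMeasure X n ω) (empMeasure Y n ω) ∂P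
              ≤ ENNReal.ofReal (C / Real.sqrt n)) ∧
          (d = 2 →
            ∫⁻ ω, W1 (empMeasure X n ω) (empMeasure Y n ω) ∂P
              ≤ ENNReal.ofReal (C * Real.sqrt (Real.log n / n))) ∧
          (3 ≤ d →
            ∫⁻ ω, W1 (empMeasure X n ω) (empMeasure Y n ω) ∂P
              ≤ ENNReal.ofReal (C / (n : ℝ) ^ (1 / d : ℝ))) := by
  have hB : 0 < 4 + 128 * |A| := by positivity
  obtain ⟨B, hBdef⟩ : ∃ B : ℝ, B = 4 + 128 * |A| := ⟨_, rfl⟩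
  rw [← hBdef] at hB
  obtain ⟨D, hD⟩ : ∃ D : ℝ, D = d * (2 * 3 ^ (d - 1)) := ⟨_, rfl⟩
  have hD0 : 0 ≤ D := by rw [hD]; positivity
  refine ⟨5 * d + B * D * 2 ^ d + 1, by positivity, ?_⟩
  intro Ω _ P hP X Y hX hY hX1 hY1 hXY hs hA n hn
  have hn0 : 0 < n := by omega
  have hn' : (0 : ℝ) < n := by exact_mod_cast hn0
  have hn2 : (2 : ℝ) ≤ n := by exact_mod_cast hn
  have main := fun N hN t ht =>
    mean_bound A P X Y hX hY hX1 hY1 hXY hs hA n hn0 N hN t ht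
  rw [← hBdef, ← hD] at main
  refine ⟨?_, ?_, ?_⟩
  · intro hd
    have hsq : 0 < Real.sqrt n := Real.sqrt_pos.2 hn'
    refine (main n hn0 (1 / Real.sqrt n) (by positivity)).trans (ENNReal.ofReal_le_ofReal ?_)
    subst hd
    have h1 := sum_inv_sq_le n
    have h2 : ∑ r ∈ Finset.Icc 1 n, (r : ℝ) ^ (1 - 1) / (r : ℝ) ^ 2 ≤ 2 :=
      h1.trans (by have : (0 : ℝ) ≤ 1 / n := by positivity
                   linarith)
    have hss : Real.sqrt n * Real.sqrt n = n := Real.mul_self_sqrt hn'.le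
    have h3 : 1 / (n : ℝ) ≤ 1 / Real.sqrt n := by
      apply one_div_le_one_div_of_le hsq
      have : 1 ≤ Real.sqrt n := by rw [Real.one_le_sqrt]; linarith
      nlinarith
    have h4 : (8 * (1 / Real.sqrt n))⁻¹ * (B / n * (D *
        ∑ r ∈ Finset.Icc 1 n, (r : ℝ) ^ (1 - 1) / (r : ℝ) ^ 2)) ≤ B * D * 2 * (1 / Real.sqrt n) := by
      calc _ ≤ (8 * (1 / Real.sqrt n))⁻¹ * (B / n * (D * 2)) := by gcongr
        _ = (B * D / 4) * (1 / Real.sqrt n) := by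
            have gen : ∀ q m : ℝ, 0 < q → m = q * q →
                (8 * (1 / q))⁻¹ * (B / m * (D * 2)) = (B * D / 4) * (1 / q) := by
              intro q m hq hm
              subst hm
              field_simp
              norm_num
            exact gen _ _ hsq hss.symm
        _ ≤ _ := by
            have : 0 ≤ B * D := by positivity
            gcongr
            linarith
    simp only [Nat.cast_one]
    have h5 : 0 < 1 / Real.sqrt n := by positivity
    refine le_of_le_of_eq ?_ (div_eq_mul_one_div _ _).symm
    linarith
  · intro hd
    have hlog : 1 / 2 ≤ Real.log n := by
      have := Real.log_two_gt_d9
      have h2 := Real.log_le_log (by norm_num) hn2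
      linarith
    obtain ⟨σ, hσ⟩ : ∃ σ, σ = Real.sqrt (Real.log n / n) := ⟨_, rfl⟩
    have hσ0 : 0 < σ := by rw [hσ]; apply Real.sqrt_pos.2; positivity
    have hσ2 : σ * σ = Real.log n / n := by rw [hσ]; apply Real.mul_self_sqrt; positivity
    rw [← hσ]
    refine (main n hn0 σ hσ0).trans (ENNReal.ofReal_le_ofReal ?_)
    subst hd
    have h2 : ∑ r ∈ Finset.Icc 1 n, (r : ℝ) ^ (2 - 1) / (r : ℝ) ^ 2 ≤ 3 * Real.log n :=
      (sum_inv_le n).trans (by linarith)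
    have h3 : 1 / (n : ℝ) ≤ 2 * σ := by
      apply le_of_sq_le_sq _ (by positivity)
      have e : (2 * σ) ^ 2 = 4 * (Real.log n / n) := by rw [← hσ2]; ring
      rw [e, div_pow, ← mul_div_assoc, div_le_div_iff₀ (by positivity) (by positivity)]
      nlinarith
    have h4 : (8 * σ)⁻¹ * (B / n * (D *
        ∑ r ∈ Finset.Icc 1 n, (r : ℝ) ^ (2 - 1) / (r : ℝ) ^ 2)) ≤ B * D * 4 * σ := by
      calc _ ≤ (8 * σ)⁻¹ * (B / n * (D * (3 * Real.log n))) := by gcongr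
        _ = (3 * B * D / 8) * σ⁻¹ * (Real.log n / n) := by
            field_simp
        _ = (3 * B * D / 8) * σ := by
            rw [← hσ2]; field_simp
        _ ≤ _ := by
            have : 0 ≤ B * D := by positivity
            gcongr
            linarith
    push_cast
    have e : (2 : ℝ) * (2 / n) = 4 * (1 / n) := by ring
    rw [e]
    norm_num at h4 ⊢
    norm_num at h3
    nlinarith
  · intro hd
    have hd0 : (d : ℝ) ≠ 0 := by positivity
    obtain ⟨ρ, hρ⟩ : ∃ ρ, ρ = (n : ℝ) ^ (1 / d : ℝ) := ⟨_, rfl⟩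
    have hρ1 : 1 ≤ ρ := by rw [hρ]; exact Real.one_le_rpow (by linarith) (by positivity)
    have hρ0 : 0 < ρ := by linarith
    have hρd : ρ ^ d = n := by
      rw [hρ, ← Real.rpow_natCast, ← Real.rpow_mul hn'.le, one_div_mul_cancel hd0, Real.rpow_one]
    rw [← hρ]
    have hNpos : 0 < ⌈ρ⌉₊ := Nat.ceil_pos.2 hρ0
    have hN1 : ρ ≤ (⌈ρ⌉₊ : ℝ) := Nat.le_ceil ρ
    have hN2 : (⌈ρ⌉₊ : ℝ) ≤ 2 * ρ := by
      have := Nat.ceil_lt_add_one hρ0.le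
      linarith
    refine (main ⌈ρ⌉₊ hNpos (1 / ρ) (by positivity)).trans (ENNReal.ofReal_le_ofReal ?_)
    have h2 : ∑ r ∈ Finset.Icc 1 ⌈ρ⌉₊, (r : ℝ) ^ (d - 1) / (r : ℝ) ^ 2 ≤ (2 * ρ) ^ (d - 2) :=
      (sum_pow_le d _ hd).trans (by gcongr)
    have h3 : (d : ℝ) / (⌈ρ⌉₊ : ℝ) ≤ d * (1 / ρ) := by
      rw [mul_one_div]; gcongr
    have h4 : (8 * (1 / ρ))⁻¹ * (B / n * (D *
        ∑ r ∈ Finset.Icc 1 ⌈ρ⌉₊, (r : ℝ) ^ (d - 1) / (r : ℝ) ^ 2)) ≤ B * D * 2 ^ d * (1 / ρ) := by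
      calc _ ≤ (8 * (1 / ρ))⁻¹ * (B / n * (D * (2 * ρ) ^ (d - 2))) := by gcongr
        _ = (B * D * 2 ^ (d - 2) / 8) * (1 / ρ) := by
            rw [← hρd]
            have : ρ ^ d = ρ ^ (d - 2) * ρ ^ 2 := by rw [← pow_add]; congr 1; omega
            rw [this, mul_pow]
            field_simp
        _ ≤ _ := by
            gcongr
            have h5 : (2 : ℝ) ^ (d - 2) ≤ 2 ^ d := pow_le_pow_right₀ (by norm_num) (by omega)
            have h6 : B * D * 2 ^ (d - 2) ≤ B * D * 2 ^ d := by gcongr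
            have h7 : 0 ≤ B * D * 2 ^ (d - 2) := by positivity
            linarith
    have h5 : 0 < 1 / ρ := by positivity
    have h6 : 0 ≤ (d : ℝ) * (1 / ρ) := by positivity
    refine le_of_le_of_eq ?_ (div_eq_mul_one_div _ _).symm
    linarith
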